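/- Fix an integer k ≥ 2 and a rational number n_0. For 2 ≤ ℓ ≤ k define the vector S_ℓ ∈ ℚ^{k−1} with coordinates indexed by j ∈ {0,1,…,k−2} given by (S_ℓ)_j = (−1)^j · e_j(n_0,…,n_0, ℓ+1, ℓ+2,…,k), where n_0 appears ℓ−1 times among the arguments of the j-th elementary symmetric polynomial. Then the ℚ-linear span of {S_ℓ : 2 ≤ ℓ ≤ k} has dimension at least k−2. -/

import Mathlib

/-- The `j`-th elementary symmetric function of a multiset of rationals. -/
def msEsymm (s : Multiset ℚ) (j : ℕ) : ℚ :=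
  ((s.powersetCard j).map Multiset.prod).sum

/-- For `2 ≤ ℓ ≤ k`, the vector `S_ℓ ∈ ℚ^{k−1}` with coordinates
`(S_ℓ)_j = (−1)^j · e_j(n_0,…,n_0, ℓ+1, ℓ+2, …, k)` for `j ∈ {0,…,k−2}`,
where `n_0` appears `ℓ − 1` times. -/
def Svec (k : ℕ) (n0 : ℚ) (l : ℕ) : Fin (k - 1) → ℚ :=
  fun j => (-1) ^ (j : ℕ) *
    msEsymm
      (Multiset.replicate (l - 1) n0 +
        ((Finset.Icc (l + 1) k).val.map fun m => (m : ℚ)))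
      (j : ℕ)

/-! Put `Q_ℓ = (X - n₀)^(ℓ-1) ∏_{ℓ<m≤k} (X - m)`, a monic polynomial of degree `k - 1`. The
coordinates of `S_ℓ` are its coefficients from the leading one down to that of `X`, and the missing
constant term is recovered from `Q_ℓ(n₀) = 0`; hence linear independence of the `Q_ℓ` passes to the
`S_ℓ`. For `ℓ ≠ n₀` the multiplicities of the root `n₀` of `Q_ℓ` are pairwise distinct, which forces
linear independence, and at most one index `ℓ` equals `n₀`. -/

open Finset Module Polynomial

section Independence

variable {ι R : Type*} [CommRing R]

theorem linearIndependent_of_injective_rootMultiplicity [IsDomain R] {p : ι → R[X]} {a : R}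
    (hp : ∀ i, p i ≠ 0) (hinj : Function.Injective fun i => (p i).rootMultiplicity a) :
    LinearIndependent R p := by
  classical
  rw [linearIndependent_iff']
  intro s c hsum
  by_contra! ⟨j, hjs, hj⟩
  obtain ⟨i, hi, hmin⟩ := exists_min_image {i ∈ s | c i ≠ 0} (fun i => (p i).rootMultiplicity a)
    ⟨j, mem_filter.2 ⟨hjs, hj⟩⟩
  obtain ⟨his, hci⟩ := mem_filter.1 hi
  set m := (p i).rootMultiplicity a
  have hdvd_ne : ∀ l ∈ s.erase i, (X - C a) ^ (m + 1) ∣ c l • p l := by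
    intro l hl
    obtain ⟨hli, hls⟩ := mem_erase.1 hl
    by_cases hcl : c l = 0
    · simp [hcl]
    · have hlt : m < (p l).rootMultiplicity a :=
        (hmin l (mem_filter.2 ⟨hls, hcl⟩)).lt_of_ne (hinj.ne hli.symm)
      rw [smul_eq_C_mul]
      exact dvd_mul_of_dvd_right ((le_rootMultiplicity_iff (hp l)).1 hlt) _
  have hdvd : (X - C a) ^ (m + 1) ∣ C (c i) * p i := by
    rw [← add_sum_erase s _ his] at hsum
    rw [← smul_eq_C_mul, eq_neg_of_add_eq_zero_left hsum]
    exact (dvd_sum hdvd_ne).neg_right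
  have hmul : C (c i) * p i ≠ 0 := mul_ne_zero (C_ne_zero.2 hci) (hp i)
  have hle := (le_rootMultiplicity_iff hmul).2 hdvd
  rw [rootMultiplicity_mul hmul, rootMultiplicity_C, zero_add] at hle
  exact m.lt_irrefl hle

/-- The first `n` signed elementary symmetric functions `(-1) ^ j * e_j(s)`, `j < n`, of a multiset
`s`. When `s` has `n` elements these are the coefficients of `X ^ (n - j)` in `∏ t ∈ s, (X - t)`;
the constant term is left out. -/
def signedEsymm (n : ℕ) (s : Multiset R) : Fin n → R :=
  fun j => (-1) ^ (j : ℕ) * s.esymm j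

theorem sum_signedEsymm_smul_X_pow_sub_C_pow {s : Multiset R} {a : R} (ha : a ∈ s) :
    ∑ j, signedEsymm s.card s j • (X ^ (s.card - j) - C a ^ (s.card - j)) =
      (s.map fun t => X - C t).prod := by
  set n := s.card with hn
  have hprod : (s.map fun t => X - C t).prod =
      (∑ j : Fin n, signedEsymm n s j • X ^ (n - j : ℕ)) + C ((-1) ^ n * s.esymm n) := by
    rw [Multiset.prod_X_sub_X_eq_sum_esymm, sum_range_succ, ← hn, Nat.sub_self,
      ← Fin.sum_univ_eq_sum_range (fun j => (-1) ^ j * (C (s.esymm j) * X ^ (n - j)))]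
    simp [signedEsymm, smul_eq_C_mul, mul_assoc]
  have hroot : (s.map fun t => X - C t).prod.eval a = 0 := by
    rw [eval_multiset_prod, Multiset.map_map]
    exact Multiset.prod_eq_zero (Multiset.mem_map.2 ⟨a, ha, by simp⟩)
  have hconst : C ((-1) ^ n * s.esymm n) = -∑ j : Fin n, signedEsymm n s j • C a ^ (n - j : ℕ) := by
    have heval := congrArg C (hprod ▸ hroot)
    simp only [eval_add, eval_finsetSum, eval_smul, eval_pow, eval_X, eval_C, map_add, map_sum,
      smul_eq_mul, map_mul C (signedEsymm n s _), map_pow C a, map_zero] at heval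
    simpa only [smul_eq_C_mul] using eq_neg_of_add_eq_zero_right heval
  rw [hprod, hconst, ← sub_eq_add_neg, ← sum_sub_distrib]
  simp only [smul_sub]

theorem linearIndependent_signedEsymm [IsDomain R] [DecidableEq R] {n : ℕ} {s : ι → Multiset R}
    {a : R} (hcard : ∀ i, (s i).card = n) (ha : ∀ i, a ∈ s i)
    (hinj : Function.Injective fun i => (s i).count a) :
    LinearIndependent R fun i => signedEsymm n (s i) := by
  let φ := Fintype.linearCombination R fun j : Fin n => X ^ (n - j : ℕ) - C a ^ (n - j : ℕ)
  have hφ : (φ ∘ fun i => signedEsymm n (s i)) = fun i => ((s i).map fun t => X - C t).prod := by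
    funext i
    rw [← sum_signedEsymm_smul_X_pow_sub_C_pow (ha i), hcard i]
    rfl
  refine .of_comp φ ?_
  rw [hφ]
  refine linearIndependent_of_injective_rootMultiplicity (a := a)
    (fun i => (monic_multisetProd_X_sub_C _).ne_zero) ?_
  simpa only [← count_roots, roots_multiset_prod_X_sub_C] using hinj

theorem card_le_finrank_span_of_mem [Nontrivial R] [Fintype ι] {M : Type*} [AddCommGroup M]
    [Module R M] {v : ι → M} {s : Set M} (hs : s.Finite) (hv : LinearIndependent R v)
    (hvs : ∀ i, v i ∈ s) : Fintype.card ι ≤ finrank R (Submodule.span R s) := by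
  have := Module.Finite.span_of_finite R hs
  rw [← finrank_span_eq_card hv]
  exact Submodule.finrank_mono (Submodule.span_mono (Set.range_subset_iff.2 hvs))

end Independence

section Arguments

variable {α : Type*}

/-- The multiset `{a, …, a, x (l + 1), …, x k}`, with `l - 1` copies of `a`, at which the elementary
symmetric functions of `S_l` are taken; the paper's case is `x m = m`. -/
def argMultiset (k : ℕ) (x : ℕ → α) (a : α) (l : ℕ) : Multiset α :=
  Multiset.replicate (l - 1) a + (Icc (l + 1) k).val.map x

theorem card_argMultiset {k l : ℕ} (x : ℕ → α) (a : α) (hl : 1 ≤ l) (hlk : l ≤ k) :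
    (argMultiset k x a l).card = k - 1 := by
  simp only [argMultiset, Multiset.card_add, Multiset.card_replicate, Multiset.card_map, card_val,
    Nat.card_Icc]
  omega

theorem mem_argMultiset_self {l : ℕ} (k : ℕ) (x : ℕ → α) (a : α) (hl : 2 ≤ l) :
    a ∈ argMultiset k x a l :=
  Multiset.mem_add.2 (.inl (Multiset.mem_replicate.2 ⟨by omega, rfl⟩))

variable [DecidableEq α]

theorem count_argMultiset (k : ℕ) (x : ℕ → α) (a : α) (l : ℕ) :
    (argMultiset k x a l).count a = l - 1 + #{m ∈ Icc (l + 1) k | a = x m} := by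
  rw [argMultiset, Multiset.count_add, Multiset.count_replicate_self, Multiset.count_map]
  rfl

theorem strictMonoOn_count_argMultiset (k : ℕ) (x : ℕ → α) (a : α) :
    StrictMonoOn (fun l => (argMultiset k x a l).count a) {l | 1 ≤ l ∧ x l ≠ a} := by
  rintro l ⟨hl, -⟩ l' ⟨-, hl'⟩ hlt
  have hsub : {m ∈ Icc (l + 1) k | a = x m} ⊆ Ioo l l' ∪ {m ∈ Icc (l' + 1) k | a = x m} := by
    intro m hm
    have hne : a = x m → m ≠ l' := by rintro h rfl; exact hl' h.symm
    simp only [mem_union, mem_filter, mem_Icc, mem_Ioo] at hm ⊢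
    grind
  have hle := (card_le_card hsub).trans (card_union_le _ _)
  rw [Nat.card_Ioo] at hle
  simp only [count_argMultiset]
  omega

theorem sub_two_le_card_filter_ne {x : ℕ → α} (hx : Function.Injective x) (k : ℕ) (a : α) :
    k - 2 ≤ #{l ∈ Icc 2 k | x l ≠ a} := by
  have hle : #{l ∈ Icc 2 k | x l = a} ≤ 1 := by
    refine card_le_one.2 fun i hi j hj => hx ?_
    rw [(mem_filter.1 hi).2, (mem_filter.1 hj).2]
  have hadd : #{l ∈ Icc 2 k | x l = a} + #{l ∈ Icc 2 k | x l ≠ a} = #(Icc 2 k) :=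
    card_filter_add_card_filter_not _
  rw [Nat.card_Icc] at hadd
  omega

end Arguments

theorem Svec_eq_signedEsymm (k : ℕ) (n0 : ℚ) :
    Svec k n0 = fun l => signedEsymm (k - 1) (argMultiset k Nat.cast n0 l) := by
  funext l
  -- In `Svec` the cast elaborates to a monadic lift of the whole multiset, not to `map Nat.cast`.
  have hcast : ((Icc (l + 1) k).val.map fun m => (m : ℚ)) =
      (Icc (l + 1) k).val.map (Nat.cast : ℕ → ℚ) := by
    simp only [Multiset.bind_def, Multiset.pure_def, Multiset.bind_singleton, Multiset.map_id']
  rw [argMultiset, ← hcast]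
  rfl

theorem stmt15_general {R : Type*} [CommRing R] [IsDomain R] [DecidableEq R] (k : ℕ) (x : ℕ → R)
    (a : R) :
    #{l ∈ Icc 2 k | x l ≠ a} ≤ finrank R (Submodule.span R
      {v | ∃ l, 2 ≤ l ∧ l ≤ k ∧ v = signedEsymm (k - 1) (argMultiset k x a l)}) := by
  have hfin : {v | ∃ l, 2 ≤ l ∧ l ≤ k ∧ v = signedEsymm (k - 1) (argMultiset k x a l)}.Finite :=
    ((Set.finite_Icc 2 k).image fun l => signedEsymm (k - 1) (argMultiset k x a l)).subset
      fun _ ⟨l, h2, hk, hv⟩ => ⟨l, ⟨h2, hk⟩, hv.symm⟩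
  have hmem (l : ({l ∈ Icc 2 k | x l ≠ a} : Finset ℕ)) : (2 ≤ l.1 ∧ l.1 ≤ k) ∧ x l ≠ a := by
    simpa only [mem_filter, mem_Icc] using l.2
  have hcount : Function.Injective fun l : ({l ∈ Icc 2 k | x l ≠ a} : Finset ℕ) =>
      (argMultiset k x a l).count a := fun l l' h =>
    Subtype.ext <| (strictMonoOn_count_argMultiset k x a).injOn
      ⟨by grind, (hmem l).2⟩ ⟨by grind, (hmem l').2⟩ h
  have hindep := linearIndependent_signedEsymm (n := k - 1)
    (fun l => card_argMultiset x a (one_le_two.trans (hmem l).1.1) (hmem l).1.2)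
    (fun l => mem_argMultiset_self k x a (hmem l).1.1) hcount
  rw [← Fintype.card_coe]
  exact card_le_finrank_span_of_mem hfin hindep fun l => ⟨l, (hmem l).1.1, (hmem l).1.2, rfl⟩

/-- For `k ≥ 2` and a rational `n_0`, the ℚ-linear span of the vectors
`S_ℓ`, `2 ≤ ℓ ≤ k`, has dimension at least `k − 2`. -/
theorem stmt15 (k : ℕ) (hk : 2 ≤ k) (n0 : ℚ) :
    k - 2 ≤ Module.finrank ℚ
      (Submodule.span ℚ
        {v : Fin (k - 1) → ℚ | ∃ l : ℕ, 2 ≤ l ∧ l ≤ k ∧ v = Svec k n0 l}) := by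
  rw [Svec_eq_signedEsymm]
  exact (sub_two_le_card_filter_ne Nat.cast_injective k n0).trans (stmt15_general k Nat.cast n0)
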